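/- Suppose {ψ_m} ⊂ N_NLS is a minimising sequence for E_NLS, i.e. E_NLS(ψ_m) → c_NLS as m → ∞. Then there exist a sequence {x_m} of real numbers, a strictly increasing sequence of indices m_j, θ ∈ [0, 2π) and y ∈ ℝ such that ψ_{m_j}(· + x_{m_j}) converges to e^{iθ}φ_NLS(· + y) in H¹(ℝ;ℂ), that is, ∫ |ψ_{m_j}(x + x_{m_j}) − e^{iθ}φ_NLS(x + y)|² dx + ∫ |ψ′_{m_j}(x + x_{m_j}) − e^{iθ}φ_NLS′(x + y)|² dx → 0 as j → ∞. -/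

import Mathlib

open MeasureTheory Filter

noncomputable def sech (x : ℝ) : ℝ := 1 / Real.cosh x

/-- `H1PairC ψ ψ'` expresses that `ψ` belongs to `H¹(ℝ;ℂ)` with weak derivative `ψ'`. -/
def H1PairC (ψ ψ' : ℝ → ℂ) : Prop :=
  Continuous ψ ∧ Integrable (fun x => ‖ψ x‖ ^ 2) ∧ Integrable (fun x => ‖ψ' x‖ ^ 2) ∧
    ∀ a b : ℝ, a ≤ b → ψ b - ψ a = ∫ t in a..b, ψ' t

/-- The nonlinear Schrödinger energy `E_NLS(ψ) = ∫ ((g₂/8)|ψ'|² + (3/8)A|ψ|⁴) dx`. -/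
noncomputable def ENLS (g₂ A : ℝ) (ψ ψ' : ℝ → ℂ) : ℝ :=
  ∫ x : ℝ, (g₂ / 8 * ‖ψ' x‖ ^ 2 + (3 / 8) * A * ‖ψ x‖ ^ 4)

/-!
Put `k = -3A/g₂`. Translate `ψ` so that its mass function `N x = ∫ t in 0..x, |ψ t|²` runs from `-α`
to `α`. Completing the square gives the Bogomolny identity
`∫ |ψ' + kNψ|² = ∫ (|ψ'|² - k|ψ|⁴) + (2/3)k²α³`,
whose right-hand side is `(8/g₂)(E_NLS(ψ) - c_NLS)`. Along a minimising sequence the residual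
`R = ψ' + kNψ` therefore tends to `0` in `L²`. Since `(|ψ|² - k(α² - N²))' = 2 Re ⟨ψ, R⟩`, the mass
function nearly solves `N' = k(α² - N²)`, and Grönwall's inequality forces `N x → α tanh (kαx)`.
Integrating `ψ' ≈ -kNψ` from `0` then gives pointwise convergence of `ψ` to a multiple of
`sech (kαx)`, as soon as `ψ 0` converges. The integrals `∫ |ψ|² = 2α` and `∫ N²|ψ|² = (2/3)α³` have
the same values for the limit, so no mass is lost and pointwise convergence of `ψ` and `Nψ` upgrades
to convergence in `L²`; the derivative follows from `ψ' = R - kNψ`.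
-/

open scoped Topology RealInnerProductSpace

section SquareIntegrable

variable {X E F : Type*} [MeasurableSpace X] {μ : Measure X}
  [NormedAddCommGroup E] [NormedAddCommGroup F]

theorem norm_sub_sq_le_two_mul_add (a b : E) : ‖a - b‖ ^ 2 ≤ 2 * ‖a‖ ^ 2 + 2 * ‖b‖ ^ 2 := by
  have := pow_le_pow_left₀ (norm_nonneg _) (norm_sub_le a b) 2
  nlinarith [sq_nonneg (‖a‖ - ‖b‖)]

theorem integrable_norm_sq_of_memLp_two {f : X → E} (hf : MemLp f 2 μ) :
    Integrable (fun x => ‖f x‖ ^ 2) μ :=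
  (memLp_two_iff_integrable_sq_norm hf.1).1 hf

theorem integral_norm_mul_norm_le_sqrt_mul_sqrt {f : X → E} {g : X → F}
    (hf : MemLp f 2 μ) (hg : MemLp g 2 μ) :
    ∫ x, ‖f x‖ * ‖g x‖ ∂μ ≤ √(∫ x, ‖f x‖ ^ 2 ∂μ) * √(∫ x, ‖g x‖ ^ 2 ∂μ) := by
  have hölder := integral_mul_norm_le_Lp_mul_Lq (μ := μ) Real.HolderConjugate.two_two
    (f := fun x => ‖f x‖) (g := fun x => ‖g x‖) (by simpa using hf.norm) (by simpa using hg.norm)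
  simpa only [norm_norm, Real.sqrt_eq_rpow, Real.rpow_two] using hölder

theorem setIntegral_norm_le_sqrt_mul_sqrt {s : Set X} (hs : μ s ≠ ⊤) {f : X → E}
    (hf : MemLp f 2 μ) :
    ∫ x in s, ‖f x‖ ∂μ ≤ √(μ.real s) * √(∫ x, ‖f x‖ ^ 2 ∂μ) := by
  have : IsFiniteMeasure (μ.restrict s) := ⟨by simpa using hs.lt_top⟩
  have hcs := integral_norm_mul_norm_le_sqrt_mul_sqrt (memLp_const (1 : ℝ)) (hf.restrict s)
  simp only [norm_one, one_mul, one_pow, integral_const, smul_eq_mul, mul_one,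
    measureReal_restrict_apply_univ] at hcs
  refine hcs.trans (mul_le_mul_of_nonneg_left (Real.sqrt_le_sqrt ?_) (Real.sqrt_nonneg _))
  exact setIntegral_le_integral (integrable_norm_sq_of_memLp_two hf)
    (Eventually.of_forall fun _ => sq_nonneg _)

theorem tendsto_integral_norm_sub_sq_of_tendsto_ae {f : ℕ → X → E} {g : X → E}
    (hf : ∀ m, MemLp (f m) 2 μ) (hg : MemLp g 2 μ)
    (hfg : ∀ᵐ x ∂μ, Tendsto (fun m => f m x) atTop (𝓝 (g x)))
    (hnorm : Tendsto (fun m => ∫ x, ‖f m x‖ ^ 2 ∂μ) atTop (𝓝 (∫ x, ‖g x‖ ^ 2 ∂μ))) :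
    Tendsto (fun m => ∫ x, ‖f m x - g x‖ ^ 2 ∂μ) atTop (𝓝 0) := by
  have hf2 m := integrable_norm_sq_of_memLp_two (hf m)
  have hg2 := integrable_norm_sq_of_memLp_two hg
  have hd2 m := integrable_norm_sq_of_memLp_two ((hf m).sub hg)
  have hgap m : Integrable (fun x => 2 * (‖f m x‖ ^ 2 - ‖g x‖ ^ 2)) μ :=
    ((hf2 m).sub hg2).const_mul 2
  let D : ℕ → X → ℝ := fun m x => max (‖f m x - g x‖ ^ 2 - 2 * (‖f m x‖ ^ 2 - ‖g x‖ ^ 2)) 0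
  have hD m : Integrable (D m) μ := ((hd2 m).sub (hgap m)).pos_part
  have hD_le m x : ‖D m x‖ ≤ 4 * ‖g x‖ ^ 2 := by
    rw [Real.norm_of_nonneg (le_max_right _ _)]
    refine max_le ?_ (by positivity)
    linarith [norm_sub_sq_le_two_mul_add (f m x) (g x)]
  have hD_lim : ∀ᵐ x ∂μ, Tendsto (fun m => D m x) atTop (𝓝 0) := by
    filter_upwards [hfg] with x hx
    have hdiff := (tendsto_sub_nhds_zero_iff.2 hx).norm.pow 2
    have hgap := (tendsto_sub_nhds_zero_iff.2 (hx.norm.pow 2)).const_mul 2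
    simpa using (hdiff.sub hgap).max (tendsto_const_nhds (x := (0 : ℝ)))
  have hD_int : Tendsto (fun m => ∫ x, D m x ∂μ) atTop (𝓝 0) := by
    simpa using tendsto_integral_of_dominated_convergence _ (fun m => (hD m).1)
      (hg2.const_mul 4) (fun m => Eventually.of_forall (hD_le m)) hD_lim
  have hupper : Tendsto (fun m => ∫ x, D m x ∂μ + 2 * (∫ x, ‖f m x‖ ^ 2 ∂μ - ∫ x, ‖g x‖ ^ 2 ∂μ))
      atTop (𝓝 0) := by
    simpa using hD_int.add ((tendsto_sub_nhds_zero_iff.2 hnorm).const_mul 2)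
  refine squeeze_zero (fun m => integral_nonneg fun x => by positivity) (fun m => ?_) hupper
  rw [← integral_sub (hf2 m) hg2, ← integral_const_mul, ← integral_add (hD m) (hgap m)]
  refine integral_mono (hd2 m) ((hD m).add (hgap m)) fun x => ?_
  exact sub_le_iff_le_add.1 (le_max_left _ _)

end SquareIntegrable

theorem eq_zero_of_tendsto_atTop_of_integrable {E : Type*} [NormedAddCommGroup E]
    {f : ℝ → E} {l : E} (hf : Integrable f) (h : Tendsto f atTop (𝓝 l)) : l = 0 := by
  refine (hf.integrableAtFilter atTop).eq_zero_of_tendsto (fun s hs => ?_) h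
  obtain ⟨a, ha⟩ := mem_atTop_sets.1 hs
  exact measure_mono_top ha Real.volume_Ici

theorem eq_zero_of_tendsto_atBot_of_integrable {E : Type*} [NormedAddCommGroup E]
    {f : ℝ → E} {l : E} (hf : Integrable f) (h : Tendsto f atBot (𝓝 l)) : l = 0 := by
  refine (hf.integrableAtFilter atBot).eq_zero_of_tendsto (fun s hs => ?_) h
  obtain ⟨a, ha⟩ := mem_atBot_sets.1 hs
  exact measure_mono_top ha Real.volume_Iic

section AbsolutelyContinuous

variable {E : Type*} [NormedAddCommGroup E]

theorem absolutelyContinuousOnInterval_of_dist_le {X Y : Type*} [PseudoMetricSpace X]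
    [PseudoMetricSpace Y] {f : ℝ → X} {g : ℝ → Y} {a b C : ℝ}
    (hg : AbsolutelyContinuousOnInterval g a b)
    (hfg : ∀ x y, dist (f x) (f y) ≤ C * dist (g x) (g y)) :
    AbsolutelyContinuousOnInterval f a b := by
  refine squeeze_zero (fun I => Finset.sum_nonneg fun i _ => dist_nonneg) (fun I => ?_)
    (by simpa using Tendsto.const_mul C hg)
  rw [Finset.mul_sum]
  exact Finset.sum_le_sum fun i _ => hfg _ _

/-- `f` is locally absolutely continuous on the line, with almost everywhere derivative `f'`. -/
structure HasACDeriv [NormedSpace ℝ E] (f f' : ℝ → E) : Prop where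
  absolutelyContinuousOnInterval : ∀ a b, AbsolutelyContinuousOnInterval f a b
  ae_hasDerivAt : ∀ᵐ x, HasDerivAt f (f' x) x

namespace HasACDeriv

section NormedSpace

variable [NormedSpace ℝ E] {f f' g g' : ℝ → E} {c c' : ℝ → ℝ}

theorem of_hasDerivAt (h : ∀ x, HasDerivAt f (f' x) x) (hf' : Continuous f') :
    HasACDeriv f f' := by
  refine ⟨fun a b => (ContDiff.contDiffOn ?_).absolutelyContinuousOnInterval,
    Eventually.of_forall h⟩
  refine contDiff_one_iff_deriv.2 ⟨fun x => (h x).differentiableAt, ?_⟩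
  rwa [funext fun x => (h x).deriv]

theorem of_integral_eq_sub [CompleteSpace E] (hf' : ∀ a b, IntervalIntegrable f' volume a b)
    (h : ∀ a b, ∫ t in a..b, f' t = f b - f a) : HasACDeriv f f' := by
  constructor
  · intro a b
    have hdom := (hf' a b).norm.absolutelyContinuousOnInterval_intervalIntegral
      Set.left_mem_uIcc
    refine absolutelyContinuousOnInterval_of_dist_le (C := 1) hdom fun x y => ?_
    rw [one_mul, dist_comm, dist_comm (intervalIntegral _ _ _ _), dist_eq_norm, ← h x y,
      dist_eq_norm, intervalIntegral.integral_interval_sub_left (hf' _ _).norm (hf' _ _).norm,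
      Real.norm_eq_abs]
    exact intervalIntegral.norm_integral_le_abs_integral_norm
  · have hloc : LocallyIntegrable f' := fun x =>
      ⟨Set.Ioc (x - 1) (x + 1), Ioc_mem_nhds (by linarith) (by linarith), (hf' _ _).1⟩
    filter_upwards [_root_.LocallyIntegrable.ae_hasDerivAt_integral hloc] with x hx
    simpa [h] using (hx 0).add_const (f 0)

theorem add (hf : HasACDeriv f f') (hg : HasACDeriv g g') :
    HasACDeriv (fun x => f x + g x) (fun x => f' x + g' x) := by
  refine ⟨fun a b => (hf.1 a b).fun_add (hg.1 a b), ?_⟩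
  filter_upwards [hf.2, hg.2] with x hfx hgx using hfx.add hgx

theorem smul (hc : HasACDeriv c c') (hf : HasACDeriv f f') :
    HasACDeriv (fun x => c x • f x) (fun x => c x • f' x + c' x • f x) := by
  refine ⟨fun a b => (hc.1 a b).fun_smul (hf.1 a b), ?_⟩
  filter_upwards [hc.2, hf.2] with x hcx hfx using hcx.smul hfx

theorem continuous (h : HasACDeriv f f') : Continuous f := by
  refine continuous_iff_continuousAt.2 fun x => ?_
  refine (h.absolutelyContinuousOnInterval (x - 1) (x + 1)).continuousOn.continuousAt ?_
  rw [Set.uIcc_of_le (by linarith)]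
  exact Icc_mem_nhds (by linarith) (by linarith)

theorem deriv_ae_eq (h : HasACDeriv f f') : deriv f =ᵐ[volume] f' :=
  h.ae_hasDerivAt.mono fun _ hx => hx.deriv

theorem aestronglyMeasurable_deriv [CompleteSpace E] (h : HasACDeriv f f') :
    AEStronglyMeasurable f' :=
  (_root_.aestronglyMeasurable_deriv f volume).congr h.deriv_ae_eq

end NormedSpace

section Real

variable {f f' : ℝ → ℝ}

theorem integral_eq_sub (h : HasACDeriv f f') (a b : ℝ) : ∫ x in a..b, f' x = f b - f a := by
  rw [← (h.absolutelyContinuousOnInterval a b).integral_deriv_eq_sub]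
  refine intervalIntegral.integral_congr_ae ?_
  filter_upwards [h.deriv_ae_eq] with x hx _ using hx.symm

theorem abs_le_integral_norm_of_tendsto_atBot (h : HasACDeriv f f') (hf' : Integrable f')
    (hlim : Tendsto f atBot (𝓝 0)) (x : ℝ) : |f x| ≤ ∫ t, ‖f' t‖ := by
  have hlim' : Tendsto (fun a => |f x - f a|) atBot (𝓝 |f x|) := by
    simpa using (hlim.const_sub (f x)).abs
  refine le_of_tendsto hlim' (Eventually.of_forall fun a => ?_)
  rw [← h.integral_eq_sub, ← Real.norm_eq_abs]
  exact intervalIntegral.norm_integral_le_integral_norm_uIoc.trans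
    (setIntegral_le_integral hf'.norm (Eventually.of_forall fun _ => norm_nonneg _))

theorem tendsto_atTop_zero (h : HasACDeriv f f') (hf : Integrable f) (hf' : Integrable f') :
    Tendsto f atTop (𝓝 0) := by
  have hlim : Tendsto f atTop (𝓝 (f 0 + ∫ t in Set.Ioi 0, f' t)) := by
    refine ((intervalIntegral_tendsto_integral_Ioi 0 hf'.integrableOn tendsto_id).const_add
      (f 0)).congr fun x => ?_
    rw [h.integral_eq_sub, id, add_sub_cancel]
  rwa [eq_zero_of_tendsto_atTop_of_integrable hf hlim] at hlim

theorem tendsto_atBot_zero (h : HasACDeriv f f') (hf : Integrable f) (hf' : Integrable f') :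
    Tendsto f atBot (𝓝 0) := by
  have hlim : Tendsto f atBot (𝓝 (f 0 - ∫ t in Set.Iic 0, f' t)) := by
    refine ((intervalIntegral_tendsto_integral_Iic 0 hf'.integrableOn tendsto_id).const_sub
      (f 0)).congr fun x => ?_
    rw [h.integral_eq_sub, id, sub_sub_cancel]
  rwa [eq_zero_of_tendsto_atBot_of_integrable hf hlim] at hlim

theorem integral_eq_sub_of_tendsto {a b : ℝ} (h : HasACDeriv f f') (hf' : Integrable f')
    (ha : Tendsto f atBot (𝓝 a)) (hb : Tendsto f atTop (𝓝 b)) : ∫ x, f' x = b - a := by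
  refine tendsto_nhds_unique
    (intervalIntegral_tendsto_integral hf' tendsto_neg_atTop_atBot tendsto_id) ?_
  refine (hb.sub (ha.comp tendsto_neg_atTop_atBot)).congr fun x => ?_
  rw [h.integral_eq_sub, id, Function.comp]

end Real

section InnerProductSpace

variable [InnerProductSpace ℝ E] {f f' : ℝ → E}

theorem norm_sq (h : HasACDeriv f f') :
    HasACDeriv (fun x => ‖f x‖ ^ 2) (fun x => 2 * ⟪f x, f' x⟫) := by
  refine ⟨fun a b => ?_, h.ae_hasDerivAt.mono fun x hx => hx.norm_sq⟩
  have hnorm : AbsolutelyContinuousOnInterval (fun x => ‖f x‖) a b :=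
    absolutelyContinuousOnInterval_of_dist_le (C := 1) (h.absolutelyContinuousOnInterval a b)
      fun x y => by simpa [dist_eq_norm (f x)] using dist_norm_norm_le (f x) (f y)
  simpa only [sq] using hnorm.fun_mul hnorm

theorem const_inner (h : HasACDeriv f f') (v : E) :
    HasACDeriv (fun x => ⟪v, f x⟫) (fun x => ⟪v, f' x⟫) := by
  refine ⟨fun a b => absolutelyContinuousOnInterval_of_dist_le (C := ‖v‖)
    (h.absolutelyContinuousOnInterval a b) fun x y => ?_, h.ae_hasDerivAt.mono fun x hx => ?_⟩
  · rw [Real.dist_eq, ← inner_sub_right, dist_eq_norm]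
    exact abs_real_inner_le_norm v _
  · exact (innerSL ℝ v).hasFDerivAt.comp_hasDerivAt x hx

theorem norm_sub_le_integral_norm (h : HasACDeriv f f') {a b : ℝ}
    (hf' : IntervalIntegrable f' volume a b) : ‖f b - f a‖ ≤ ∫ t in Set.uIoc a b, ‖f' t‖ := by
  set v := f b - f a
  rcases eq_or_ne v 0 with hv | hv
  · simpa [hv] using integral_nonneg fun t => norm_nonneg (f' t)
  have hsq : ‖v‖ * ‖v‖ ≤ ‖v‖ * ∫ t in Set.uIoc a b, ‖f' t‖ := by
    calc ‖v‖ * ‖v‖ = ‖∫ t in a..b, ⟪v, f' t⟫‖ := by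
          rw [(h.const_inner v).integral_eq_sub, ← inner_sub_right,
            real_inner_self_eq_norm_mul_norm, Real.norm_of_nonneg (by positivity)]
      _ ≤ ∫ t in Set.uIoc a b, ‖v‖ * ‖f' t‖ :=
          intervalIntegral.norm_integral_le_integral_norm_uIoc.trans <|
            integral_mono_of_nonneg (Eventually.of_forall fun _ => norm_nonneg _)
              (hf'.def'.norm.const_mul _)
              (Eventually.of_forall fun t => abs_real_inner_le_norm v (f' t))
      _ = ‖v‖ * ∫ t in Set.uIoc a b, ‖f' t‖ := integral_const_mul _ _
  exact le_of_mul_le_mul_left hsq (norm_pos_iff.2 hv)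

end InnerProductSpace

end HasACDeriv

end AbsolutelyContinuous

-- Outside the integrable case the interval integral is `0`, so `f` would be constant near infinity.
theorem intervalIntegrable_of_sub_eq_integral {E : Type*} [NormedAddCommGroup E] [NormedSpace ℝ E]
    {f f' : ℝ → E} (hf : Integrable (fun x => ‖f x‖ ^ 2)) (hne : f ≠ 0)
    (h : ∀ a b, a ≤ b → f b - f a = ∫ t in a..b, f' t) (a b : ℝ) :
    IntervalIntegrable f' volume a b := by
  by_contra hab
  refine hne (funext fun x => ?_)
  suffices ‖f x‖ ^ 2 = 0 by simpa using this
  have heq {c d : ℝ} (hcd : c ≤ d) (hc : ¬ IntervalIntegrable f' volume c d) : f d = f c :=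
    sub_eq_zero.1 ((h c d hcd).trans (intervalIntegral.integral_undef hc))
  by_cases hright : ∃ d ≥ max x (max a b), IntervalIntegrable f' volume x d
  · obtain ⟨d, hd, hxd⟩ := hright
    simp only [ge_iff_le, max_le_iff] at hd
    refine eq_zero_of_tendsto_atBot_of_integrable hf (tendsto_const_nhds.congr' ?_)
    filter_upwards [eventually_le_atBot (min x (min a b))] with c hc
    simp only [le_min_iff] at hc
    rw [heq hc.1 fun hcx => hab ((hcx.trans hxd).mono_set ?_)]
    rw [Set.uIcc_of_le (hc.1.trans hd.1)]
    exact Set.uIcc_subset_Icc ⟨hc.2.1, hd.2.1⟩ ⟨hc.2.2, hd.2.2⟩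
  · push Not at hright
    refine eq_zero_of_tendsto_atTop_of_integrable hf (tendsto_const_nhds.congr' ?_)
    filter_upwards [eventually_ge_atTop (max x (max a b))] with d hd
    rw [heq ((le_max_left _ _).trans hd) (hright d hd)]

/-- `N` is the primitive, vanishing at the origin, of a density `n ≥ 0` that has mass `α` on each
half-line. -/
structure IsCentredMass (α : ℝ) (N n : ℝ → ℝ) : Prop where
  hasDerivAt : ∀ x, HasDerivAt N (n x) x
  density_nonneg : ∀ x, 0 ≤ n x
  map_zero : N 0 = 0
  tendsto_atTop : Tendsto N atTop (𝓝 α)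
  tendsto_atBot : Tendsto N atBot (𝓝 (-α))

namespace IsCentredMass

variable {α : ℝ} {N n : ℝ → ℝ}

theorem continuous (h : IsCentredMass α N n) : Continuous N :=
  continuous_iff_continuousAt.2 fun x => (h.hasDerivAt x).continuousAt

theorem abs_le (h : IsCentredMass α N n) (x : ℝ) : |N x| ≤ α := by
  have hmono : Monotone N := monotone_of_hasDerivAt_nonneg h.hasDerivAt h.density_nonneg
  exact _root_.abs_le.2
    ⟨hmono.le_of_tendsto h.tendsto_atBot x, hmono.ge_of_tendsto h.tendsto_atTop x⟩

theorem sq_le (h : IsCentredMass α N n) (x : ℝ) : N x ^ 2 ≤ α ^ 2 :=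
  sq_le_sq' (_root_.abs_le.1 (h.abs_le x)).1 (_root_.abs_le.1 (h.abs_le x)).2

theorem abs_integral_le (h : IsCentredMass α N n) (x : ℝ) : |∫ t in 0..x, N t| ≤ α * |x| := by
  simpa using intervalIntegral.norm_integral_le_of_norm_le_const (f := N) (a := 0) (b := x)
    fun t _ => h.abs_le t

theorem reflect (h : IsCentredMass α N n) :
    IsCentredMass α (fun x => -N (-x)) (fun x => n (-x)) where
  hasDerivAt x := by
    simpa [Function.comp_def] using ((h.hasDerivAt (-x)).comp x (hasDerivAt_neg x)).fun_neg
  density_nonneg x := h.density_nonneg (-x)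
  map_zero := by simp [h.map_zero]
  tendsto_atTop := by simpa using (h.tendsto_atBot.comp tendsto_neg_atTop_atBot).neg
  tendsto_atBot := (h.tendsto_atTop.comp tendsto_neg_atBot_atTop).neg

theorem integrableOn_Ioi_density (h : IsCentredMass α N n) : IntegrableOn n (Set.Ioi 0) :=
  integrableOn_Ioi_deriv_of_nonneg' (fun x _ => h.hasDerivAt x) (fun x _ => h.density_nonneg x)
    h.tendsto_atTop

theorem integrable_density (h : IsCentredMass α N n) : Integrable n := by
  have hneg : IntegrableOn n (Set.Iio 0) := by
    rw [← (Measure.measurePreserving_neg (volume : Measure ℝ)).integrableOn_comp_preimage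
      (Homeomorph.neg ℝ).measurableEmbedding]
    simpa [Function.comp_def] using h.reflect.integrableOn_Ioi_density
  rw [← integrableOn_univ, ← Set.Iio_union_Ici (a := 0), integrableOn_union,
    integrableOn_Ici_iff_integrableOn_Ioi]
  exact ⟨hneg, h.integrableOn_Ioi_density⟩

theorem integral_density (h : IsCentredMass α N n) : ∫ x, n x = 2 * α := by
  rw [integral_of_hasDerivAt_of_tendsto h.hasDerivAt h.integrable_density h.tendsto_atBot
    h.tendsto_atTop]
  ring

theorem integrable_sq_mul_density (h : IsCentredMass α N n) :
    Integrable (fun x => N x ^ 2 * n x) := by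
  refine h.integrable_density.bdd_mul (c := α ^ 2) (h.continuous.pow 2).aestronglyMeasurable
    (Eventually.of_forall fun x => ?_)
  simpa using h.sq_le x

theorem integral_sq_mul_density (h : IsCentredMass α N n) :
    ∫ x, N x ^ 2 * n x = 2 / 3 * α ^ 3 := by
  have hderiv x : HasDerivAt (fun x => N x ^ 3 / 3) (N x ^ 2 * n x) x :=
    (((h.hasDerivAt x).pow 3).div_const 3).congr_deriv (by norm_num; ring)
  rw [integral_of_hasDerivAt_of_tendsto hderiv h.integrable_sq_mul_density
    ((h.tendsto_atBot.pow 3).div_const 3) ((h.tendsto_atTop.pow 3).div_const 3)]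
  ring

theorem abs_sub_le_gronwallBound_of_nonneg {T : ℝ → ℝ} {k ε x : ℝ} (hk : 0 ≤ k)
    (hN : IsCentredMass α N n) (hT : IsCentredMass α T fun x => k * (α ^ 2 - T x ^ 2))
    (hε : ∀ x, |n x - k * (α ^ 2 - N x ^ 2)| ≤ ε) (hx : 0 ≤ x) :
    |N x - T x| ≤ gronwallBound 0 (2 * k * α) ε x := by
  have hα : 0 ≤ α := (abs_nonneg _).trans (hN.abs_le 0)
  have hK : 0 ≤ 2 * k * α := by positivity
  have hlip : LipschitzOnWith (2 * k * α).toNNReal (fun y : ℝ => k * (α ^ 2 - y ^ 2))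
      {y | |y| ≤ α} := by
    refine LipschitzOnWith.of_dist_le_mul fun y hy z hz => ?_
    have hyz : |z + y| ≤ 2 * α := (abs_add_le _ _).trans (by linarith [hy.out, hz.out])
    calc |k * (α ^ 2 - y ^ 2) - k * (α ^ 2 - z ^ 2)| = k * |z + y| * |y - z| := by
          rw [← abs_of_nonneg hk, ← abs_mul, ← abs_mul, abs_of_nonneg hk, abs_sub_comm]
          congr 1
          ring
      _ ≤ k * (2 * α) * |y - z| := by gcongr
      _ = (2 * k * α).toNNReal * |y - z| := by rw [Real.coe_toNNReal _ hK]; ring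
  simpa [hK, Real.dist_eq] using dist_le_of_approx_trajectories_ODE_of_mem
    (a := 0) (b := x) (εg := 0)
    (v := fun _ y => k * (α ^ 2 - y ^ 2)) (s := fun _ => {y | |y| ≤ α}) (fun _ _ => hlip)
    hN.continuous.continuousOn (fun t _ => (hN.hasDerivAt t).hasDerivWithinAt)
    (fun t _ => hε t) (fun t _ => hN.abs_le t)
    hT.continuous.continuousOn (fun t _ => (hT.hasDerivAt t).hasDerivWithinAt)
    (fun t _ => (dist_self _).le) (fun t _ => hT.abs_le t)
    (by simp [hN.map_zero, hT.map_zero] : dist (N 0) (T 0) ≤ 0) x (Set.right_mem_Icc.2 hx)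

theorem abs_sub_le_gronwallBound {T : ℝ → ℝ} {k ε : ℝ} (hk : 0 ≤ k) (hN : IsCentredMass α N n)
    (hT : IsCentredMass α T fun x => k * (α ^ 2 - T x ^ 2))
    (hε : ∀ x, |n x - k * (α ^ 2 - N x ^ 2)| ≤ ε) (x : ℝ) :
    |N x - T x| ≤ gronwallBound 0 (2 * k * α) ε |x| := by
  rcases le_total 0 x with hx | hx
  · rw [abs_of_nonneg hx]
    exact abs_sub_le_gronwallBound_of_nonneg hk hN hT hε hx
  · rw [abs_of_nonpos hx]
    have := abs_sub_le_gronwallBound_of_nonneg (T := fun x => -T (-x)) hk hN.reflect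
      (by simpa using hT.reflect) (fun y => by simpa using hε (-y)) (neg_nonneg.2 hx)
    rwa [neg_neg, neg_sub_neg, abs_sub_comm] at this

end IsCentredMass

theorem exists_isCentredMass_translate {α : ℝ} {n : ℝ → ℝ} (hα : 0 < α) (hn : Continuous n)
    (hnonneg : ∀ x, 0 ≤ n x) (hint : Integrable n) (hmass : ∫ x, n x = 2 * α) :
    ∃ (x₀ : ℝ) (N : ℝ → ℝ), IsCentredMass α N (fun x => n (x + x₀)) := by
  let F : ℝ → ℝ := fun x => ∫ t in Set.Iic x, n t
  have hF_eq x : F x = F 0 + ∫ t in 0..x, n t := by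
    rw [← intervalIntegral.integral_Iic_sub_Iic hint.integrableOn hint.integrableOn]
    exact (add_sub_cancel _ _).symm
  have hF x : HasDerivAt F (n x) x := by
    rw [funext hF_eq]
    exact (hn.integral_hasStrictDerivAt 0 x).hasDerivAt.const_add (F 0)
  have hF_top : Tendsto F atTop (𝓝 (2 * α)) := by
    rw [← hmass]
    exact (aecover_Iic tendsto_id).integral_tendsto_of_countably_generated hint
  have hF_bot : Tendsto F atBot (𝓝 0) := tendsto_integral_Iic_zero tendsto_id
  obtain ⟨x₀, hx₀⟩ : α ∈ Set.range F :=
    mem_range_of_exists_le_of_exists_ge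
      (continuous_iff_continuousAt.2 fun x => (hF x).continuousAt)
      (hF_bot.eventually_le_const hα).exists
      (hF_top.eventually_const_le (by linarith)).exists
  refine ⟨x₀, fun x => F (x + x₀) - α, fun x => ((hF _).comp_add_const x x₀).sub_const α,
    fun x => hnonneg _, by simp [hx₀], ?_, ?_⟩
  · have := (hF_top.comp (tendsto_atTop_add_const_right atTop x₀ tendsto_id)).sub_const α
    rwa [two_mul, add_sub_cancel_right] at this
  · have := (hF_bot.comp (tendsto_atBot_add_const_right atBot x₀ tendsto_id)).sub_const α
    rwa [zero_sub] at this

section CentredH1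

variable {E : Type*} [NormedAddCommGroup E] [InnerProductSpace ℝ E]

/-- `ψ` is an `H¹` function with weak derivative `ψ'`, translated so that half of its mass
`∫ ‖ψ‖² = 2α` lies on each side of the origin; `N x = ∫ t in 0..x, ‖ψ t‖²` is its mass function. -/
structure IsCentredH1 (α : ℝ) (ψ ψ' : ℝ → E) (N : ℝ → ℝ) : Prop where
  hasACDeriv : HasACDeriv ψ ψ'
  integrable_norm_deriv_sq : Integrable (fun x => ‖ψ' x‖ ^ 2)
  isCentredMass : IsCentredMass α N (fun x => ‖ψ x‖ ^ 2)

/-- The defect of `ψ` in the first order (Bogomolny) equation `ψ' = -kNψ`, which is solved by the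
solitons. -/
def bogomolnyResidual (k : ℝ) (ψ ψ' : ℝ → E) (N : ℝ → ℝ) (x : ℝ) : E :=
  ψ' x + (k * N x) • ψ x

theorem norm_bogomolnyResidual_sq (k : ℝ) (ψ ψ' : ℝ → E) (N : ℝ → ℝ) (x : ℝ) :
    ‖bogomolnyResidual k ψ ψ' N x‖ ^ 2 = (‖ψ' x‖ ^ 2 - k * ‖ψ x‖ ^ 4) +
      (k * (N x * (2 * ⟪ψ x, ψ' x⟫) + ‖ψ x‖ ^ 2 * ‖ψ x‖ ^ 2) + k ^ 2 * (N x ^ 2 * ‖ψ x‖ ^ 2)) := by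
  rw [bogomolnyResidual, norm_add_sq_real, inner_smul_right, norm_smul, mul_pow,
    Real.norm_eq_abs, sq_abs, real_inner_comm]
  ring

namespace IsCentredH1

variable {α k : ℝ} {ψ ψ' : ℝ → E} {N : ℝ → ℝ}

theorem integrable_norm_sq (h : IsCentredH1 α ψ ψ' N) : Integrable (fun x => ‖ψ x‖ ^ 2) :=
  h.isCentredMass.integrable_density

theorem memLp_two (h : IsCentredH1 α ψ ψ' N) : MemLp ψ 2 :=
  (memLp_two_iff_integrable_sq_norm h.hasACDeriv.continuous.aestronglyMeasurable).2
    h.integrable_norm_sq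

theorem memLp_mass_smul (h : IsCentredH1 α ψ ψ' N) : MemLp (fun x => N x • ψ x) 2 := by
  refine (memLp_two_iff_integrable_sq_norm
    (h.isCentredMass.continuous.smul h.hasACDeriv.continuous).aestronglyMeasurable).2 ?_
  simpa only [Pi.smul_apply', norm_smul, mul_pow, Real.norm_eq_abs, sq_abs] using
    h.isCentredMass.integrable_sq_mul_density

theorem integrable_deriv_norm_sq (h : IsCentredH1 α ψ ψ' N) :
    Integrable (fun x => 2 * ⟪ψ x, ψ' x⟫) := by
  refine (h.integrable_norm_sq.add h.integrable_norm_deriv_sq).mono'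
    h.hasACDeriv.norm_sq.aestronglyMeasurable_deriv (Eventually.of_forall fun x => ?_)
  rw [norm_mul, Real.norm_ofNat, Real.norm_eq_abs]
  have := abs_real_inner_le_norm (ψ x) (ψ' x)
  simp only [Pi.add_apply]
  nlinarith [sq_nonneg (‖ψ x‖ - ‖ψ' x‖)]

theorem tendsto_norm_sq_atTop (h : IsCentredH1 α ψ ψ' N) :
    Tendsto (fun x => ‖ψ x‖ ^ 2) atTop (𝓝 0) :=
  h.hasACDeriv.norm_sq.tendsto_atTop_zero h.integrable_norm_sq h.integrable_deriv_norm_sq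

theorem tendsto_norm_sq_atBot (h : IsCentredH1 α ψ ψ' N) :
    Tendsto (fun x => ‖ψ x‖ ^ 2) atBot (𝓝 0) :=
  h.hasACDeriv.norm_sq.tendsto_atBot_zero h.integrable_norm_sq h.integrable_deriv_norm_sq

theorem integrable_norm_pow_four (h : IsCentredH1 α ψ ψ' N) :
    Integrable (fun x => ‖ψ x‖ ^ 4) := by
  have hbound := h.hasACDeriv.norm_sq.abs_le_integral_norm_of_tendsto_atBot
    h.integrable_deriv_norm_sq h.tendsto_norm_sq_atBot
  refine (h.integrable_norm_sq.bdd_mul h.integrable_norm_sq.1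
    (Eventually.of_forall hbound)).congr (Eventually.of_forall fun x => ?_)
  ring

theorem hasACDeriv_mass (h : IsCentredH1 α ψ ψ' N) : HasACDeriv N (fun x => ‖ψ x‖ ^ 2) :=
  .of_hasDerivAt h.isCentredMass.hasDerivAt (h.hasACDeriv.continuous.norm.pow 2)

theorem integrable_deriv_mass_mul_norm_sq (h : IsCentredH1 α ψ ψ' N) :
    Integrable (fun x => N x * (2 * ⟪ψ x, ψ' x⟫) + ‖ψ x‖ ^ 2 * ‖ψ x‖ ^ 2) := by
  refine (h.integrable_deriv_norm_sq.bdd_mul h.isCentredMass.continuous.aestronglyMeasurable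
    (Eventually.of_forall h.isCentredMass.abs_le)).add ?_
  simpa only [← pow_add] using h.integrable_norm_pow_four

theorem integral_deriv_mass_mul_norm_sq (h : IsCentredH1 α ψ ψ' N) :
    ∫ x, (N x * (2 * ⟪ψ x, ψ' x⟫) + ‖ψ x‖ ^ 2 * ‖ψ x‖ ^ 2) = 0 := by
  refine ((h.hasACDeriv_mass.smul h.hasACDeriv.norm_sq).integral_eq_sub_of_tendsto
    h.integrable_deriv_mass_mul_norm_sq
    (h.isCentredMass.tendsto_atBot.mul h.tendsto_norm_sq_atBot)
    (h.isCentredMass.tendsto_atTop.mul h.tendsto_norm_sq_atTop)).trans ?_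
  ring

theorem integrable_norm_bogomolnyResidual_sq (h : IsCentredH1 α ψ ψ' N) (k : ℝ) :
    Integrable (fun x => ‖bogomolnyResidual k ψ ψ' N x‖ ^ 2) := by
  simp only [norm_bogomolnyResidual_sq]
  exact (h.integrable_norm_deriv_sq.sub (h.integrable_norm_pow_four.const_mul k)).add
    ((h.integrable_deriv_mass_mul_norm_sq.const_mul k).add
      (h.isCentredMass.integrable_sq_mul_density.const_mul (k ^ 2)))

theorem integral_norm_bogomolnyResidual_sq (h : IsCentredH1 α ψ ψ' N) (k : ℝ) :
    ∫ x, ‖bogomolnyResidual k ψ ψ' N x‖ ^ 2 =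
      (∫ x, (‖ψ' x‖ ^ 2 - k * ‖ψ x‖ ^ 4)) + 2 / 3 * k ^ 2 * α ^ 3 := by
  have henergy : Integrable (fun x => ‖ψ' x‖ ^ 2 - k * ‖ψ x‖ ^ 4) :=
    h.integrable_norm_deriv_sq.sub (h.integrable_norm_pow_four.const_mul k)
  have hflux := h.integrable_deriv_mass_mul_norm_sq.const_mul k
  have hcubic := h.isCentredMass.integrable_sq_mul_density.const_mul (k ^ 2)
  simp only [norm_bogomolnyResidual_sq]
  refine (integral_add henergy (hflux.add hcubic)).trans ?_
  congr 1
  refine (integral_add hflux hcubic).trans ?_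
  rw [integral_const_mul, integral_const_mul, h.integral_deriv_mass_mul_norm_sq,
    h.isCentredMass.integral_sq_mul_density]
  ring

theorem hasACDeriv_norm_sq_sub (h : IsCentredH1 α ψ ψ' N) (k : ℝ) :
    HasACDeriv (fun x => ‖ψ x‖ ^ 2 - k * (α ^ 2 - N x ^ 2))
      (fun x => 2 * ⟪ψ x, bogomolnyResidual k ψ ψ' N x⟫) := by
  have hpot : HasACDeriv (fun x => -(k * (α ^ 2 - N x ^ 2)))
      (fun x => 2 * k * N x * ‖ψ x‖ ^ 2) := by
    refine .of_hasDerivAt (fun x => ?_) ((h.isCentredMass.continuous.const_mul _).mul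
      (h.hasACDeriv.continuous.norm.pow 2))
    exact ((((h.isCentredMass.hasDerivAt x).pow 2).const_sub (α ^ 2)).const_mul k).neg.congr_deriv
      (by norm_num; ring)
  convert! h.hasACDeriv.norm_sq.add hpot using 2 with x
  rw [bogomolnyResidual, inner_add_right, inner_smul_right, real_inner_self_eq_norm_sq]
  ring

theorem hasACDeriv_exp_smul (h : IsCentredH1 α ψ ψ' N) (k : ℝ) :
    HasACDeriv (fun x => Real.exp (k * ∫ t in 0..x, N t) • ψ x)
      (fun x => Real.exp (k * ∫ t in 0..x, N t) • bogomolnyResidual k ψ ψ' N x) := by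
  have hprim x : HasDerivAt (fun x => ∫ t in 0..x, N t) (N x) x :=
    h.isCentredMass.continuous.integral_hasStrictDerivAt 0 x |>.hasDerivAt
  have hexp x := ((hprim x).const_mul k).exp
  have hcont : Continuous fun x => Real.exp (k * ∫ t in 0..x, N t) :=
    continuous_iff_continuousAt.2 fun x => (hexp x).continuousAt
  convert! (HasACDeriv.of_hasDerivAt hexp
    (hcont.mul (h.isCentredMass.continuous.const_mul k))).smul h.hasACDeriv using 2 with x
  rw [bogomolnyResidual, smul_add, smul_smul]

variable [CompleteSpace E]

theorem memLp_bogomolnyResidual (h : IsCentredH1 α ψ ψ' N) (k : ℝ) :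
    MemLp (bogomolnyResidual k ψ ψ' N) 2 := by
  refine (memLp_two_iff_integrable_sq_norm ?_).2 (h.integrable_norm_bogomolnyResidual_sq k)
  exact h.hasACDeriv.aestronglyMeasurable_deriv.add
    ((h.isCentredMass.continuous.const_mul k).smul
      h.hasACDeriv.continuous).aestronglyMeasurable

theorem abs_norm_sq_sub_le (h : IsCentredH1 α ψ ψ' N) (k x : ℝ) :
    |‖ψ x‖ ^ 2 - k * (α ^ 2 - N x ^ 2)| ≤
      2 * √(2 * α) * √(∫ t, ‖bogomolnyResidual k ψ ψ' N t‖ ^ 2) := by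
  have hH := h.hasACDeriv_norm_sq_sub k
  set R := bogomolnyResidual k ψ ψ' N
  have hR : MemLp R 2 := h.memLp_bogomolnyResidual k
  have hψR : Integrable (fun t => 2 * (‖ψ t‖ * ‖R t‖)) :=
    (h.memLp_two.norm.integrable_mul hR.norm).const_mul 2
  have hle t : ‖2 * ⟪ψ t, R t⟫‖ ≤ 2 * (‖ψ t‖ * ‖R t‖) := by
    rw [norm_mul, Real.norm_ofNat]
    exact mul_le_mul_of_nonneg_left (abs_real_inner_le_norm _ _) two_pos.le
  have hderiv := hψR.mono' hH.aestronglyMeasurable_deriv (Eventually.of_forall hle)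
  have hlim : Tendsto (fun t => ‖ψ t‖ ^ 2 - k * (α ^ 2 - N t ^ 2)) atBot (𝓝 0) := by
    have hpot := ((h.isCentredMass.tendsto_atBot.pow 2).const_sub (α ^ 2)).const_mul k
    rw [neg_sq, sub_self, mul_zero] at hpot
    simpa using h.tendsto_norm_sq_atBot.sub hpot
  calc |‖ψ x‖ ^ 2 - k * (α ^ 2 - N x ^ 2)|
      ≤ ∫ t, ‖2 * ⟪ψ t, R t⟫‖ := hH.abs_le_integral_norm_of_tendsto_atBot hderiv hlim x
    _ ≤ ∫ t, 2 * (‖ψ t‖ * ‖R t‖) := integral_mono hderiv.norm hψR hle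
    _ ≤ 2 * (√(∫ t, ‖ψ t‖ ^ 2) * √(∫ t, ‖R t‖ ^ 2)) := by
        rw [integral_const_mul]
        exact mul_le_mul_of_nonneg_left
          (integral_norm_mul_norm_le_sqrt_mul_sqrt h.memLp_two hR) two_pos.le
    _ = 2 * √(2 * α) * √(∫ t, ‖R t‖ ^ 2) := by
        rw [h.isCentredMass.integral_density, mul_assoc]

theorem norm_exp_smul_sub_le (h : IsCentredH1 α ψ ψ' N) (hk : 0 ≤ k) (x : ℝ) :
    ‖Real.exp (k * ∫ t in 0..x, N t) • ψ x - ψ 0‖ ≤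
      Real.exp (k * (α * |x|)) * (√|x| * √(∫ t, ‖bogomolnyResidual k ψ ψ' N t‖ ^ 2)) := by
  have hAC := h.hasACDeriv_exp_smul k
  have hR := h.memLp_bogomolnyResidual k
  set R := bogomolnyResidual k ψ ψ' N
  set C := Real.exp (k * (α * |x|))
  have hfin : volume (Set.uIoc 0 x) ≠ ⊤ := by simp [Set.uIoc]
  have : IsFiniteMeasure (volume.restrict (Set.uIoc 0 x)) := ⟨by simp⟩
  have hRint : IntegrableOn (fun t => C * ‖R t‖) (Set.uIoc 0 x) :=
    ((hR.restrict _).integrable one_le_two).norm.const_mul C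
  have hle : ∀ t ∈ Set.uIoc 0 x, ‖Real.exp (k * ∫ s in 0..t, N s) • R t‖ ≤ C * ‖R t‖ := by
    intro t ht
    rw [norm_smul, Real.norm_of_nonneg (Real.exp_pos _).le]
    have htx : |t| ≤ |x| := by
      simpa using Set.abs_sub_left_of_mem_uIcc (Set.uIoc_subset_uIcc ht)
    have hα : 0 ≤ α := (abs_nonneg _).trans (h.isCentredMass.abs_le 0)
    have hmass : ∫ s in 0..t, N s ≤ α * |x| :=
      (le_abs_self _).trans ((h.isCentredMass.abs_integral_le t).trans (by gcongr))
    gcongr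
    exact Real.exp_le_exp.2 (mul_le_mul_of_nonneg_left hmass hk)
  have hint : IntegrableOn (fun t => Real.exp (k * ∫ s in 0..t, N s) • R t) (Set.uIoc 0 x) :=
    hRint.mono' hAC.aestronglyMeasurable_deriv.restrict
      (ae_restrict_of_forall_mem measurableSet_uIoc hle)
  calc ‖Real.exp (k * ∫ t in 0..x, N t) • ψ x - ψ 0‖
      ≤ ∫ t in Set.uIoc 0 x, ‖Real.exp (k * ∫ s in 0..t, N s) • R t‖ := by
        simpa using hAC.norm_sub_le_integral_norm (intervalIntegrable_iff.2 hint)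
    _ ≤ ∫ t in Set.uIoc 0 x, C * ‖R t‖ :=
        setIntegral_mono_on hint.norm hRint measurableSet_uIoc hle
    _ ≤ C * (√|x| * √(∫ t, ‖R t‖ ^ 2)) := by
        have hvol : volume.real (Set.uIoc 0 x) = |x| := by simp [Measure.real]
        rw [integral_const_mul, ← hvol]
        exact mul_le_mul_of_nonneg_left (setIntegral_norm_le_sqrt_mul_sqrt hfin hR)
          (Real.exp_pos _).le

end IsCentredH1

end CentredH1

section MinimisingSequence

variable {E : Type*} [NormedAddCommGroup E] [InnerProductSpace ℝ E]
  {α k : ℝ} {ψ ψ' : ℕ → ℝ → E} {N : ℕ → ℝ → ℝ} {χ χ' : ℝ → E} {T : ℝ → ℝ}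

theorem tendsto_integral_of_isCentredMass {n : ℕ → ℝ → ℝ} (h : ∀ m, IsCentredMass α (N m) (n m))
    (hN : ∀ x, Tendsto (fun m => N m x) atTop (𝓝 (T x))) (x : ℝ) :
    Tendsto (fun m => ∫ t in 0..x, N m t) atTop (𝓝 (∫ t in 0..x, T t)) :=
  intervalIntegral.tendsto_integral_filter_of_dominated_convergence (fun _ => α)
    (Eventually.of_forall fun m => (h m).continuous.aestronglyMeasurable)
    (Eventually.of_forall fun m => ae_of_all _ fun t _ => (h m).abs_le t)
    intervalIntegrable_const (ae_of_all _ fun t _ => hN t)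

theorem tendsto_integral_norm_sub_sq (h : ∀ m, IsCentredH1 α (ψ m) (ψ' m) (N m))
    (hχ : IsCentredH1 α χ χ' T) (hψ : ∀ x, Tendsto (fun m => ψ m x) atTop (𝓝 (χ x))) :
    Tendsto (fun m => ∫ x, ‖ψ m x - χ x‖ ^ 2) atTop (𝓝 0) := by
  refine tendsto_integral_norm_sub_sq_of_tendsto_ae (fun m => (h m).memLp_two) hχ.memLp_two
    (ae_of_all _ hψ) ?_
  simp only [(h _).isCentredMass.integral_density, hχ.isCentredMass.integral_density,
    tendsto_const_nhds]

theorem tendsto_integral_norm_mass_smul_sub_sq (h : ∀ m, IsCentredH1 α (ψ m) (ψ' m) (N m))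
    (hχ : IsCentredH1 α χ χ' T) (hN : ∀ x, Tendsto (fun m => N m x) atTop (𝓝 (T x)))
    (hψ : ∀ x, Tendsto (fun m => ψ m x) atTop (𝓝 (χ x))) :
    Tendsto (fun m => ∫ x, ‖N m x • ψ m x - T x • χ x‖ ^ 2) atTop (𝓝 0) := by
  refine tendsto_integral_norm_sub_sq_of_tendsto_ae (fun m => (h m).memLp_mass_smul)
    hχ.memLp_mass_smul (ae_of_all _ fun x => (hN x).smul (hψ x)) ?_
  simp only [norm_smul, mul_pow, Real.norm_eq_abs, sq_abs,
    (h _).isCentredMass.integral_sq_mul_density, hχ.isCentredMass.integral_sq_mul_density,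
    tendsto_const_nhds]

theorem tendsto_integral_norm_deriv_sub_sq (h : ∀ m, IsCentredH1 α (ψ m) (ψ' m) (N m))
    (hres : Tendsto (fun m => ∫ x, ‖bogomolnyResidual k (ψ m) (ψ' m) (N m) x‖ ^ 2) atTop (𝓝 0))
    (hχ : IsCentredH1 α χ χ' T) (hχres : bogomolnyResidual k χ χ' T = 0)
    (hmass : Tendsto (fun m => ∫ x, ‖N m x • ψ m x - T x • χ x‖ ^ 2) atTop (𝓝 0)) :
    Tendsto (fun m => ∫ x, ‖ψ' m x - χ' x‖ ^ 2) atTop (𝓝 0) := by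
  have hupper := (hres.const_mul 2).add (hmass.const_mul (2 * k ^ 2))
  simp only [mul_zero, add_zero] at hupper
  refine squeeze_zero (fun m => integral_nonneg fun x => by positivity) (fun m => ?_) hupper
  have hR := ((h m).integrable_norm_bogomolnyResidual_sq k).const_mul 2
  have hM : Integrable (fun x => 2 * k ^ 2 * ‖N m x • ψ m x - T x • χ x‖ ^ 2) :=
    (integrable_norm_sq_of_memLp_two
      ((h m).memLp_mass_smul.sub hχ.memLp_mass_smul)).const_mul (2 * k ^ 2)
  rw [← integral_const_mul, ← integral_const_mul, ← integral_add hR hM]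
  refine integral_mono_of_nonneg (ae_of_all _ fun x => by positivity) (hR.add hM)
    (ae_of_all _ fun x => ?_)
  have hsplit : ψ' m x - χ' x =
      bogomolnyResidual k (ψ m) (ψ' m) (N m) x - k • (N m x • ψ m x - T x • χ x) := by
    have hzero := congrFun hχres x
    simp only [bogomolnyResidual, Pi.zero_apply, add_eq_zero_iff_eq_neg] at hzero ⊢
    rw [hzero]
    module
  have hle := norm_sub_sq_le_two_mul_add (bogomolnyResidual k (ψ m) (ψ' m) (N m) x)
    (k • (N m x • ψ m x - T x • χ x))
  rw [← hsplit, norm_smul, mul_pow, Real.norm_eq_abs, sq_abs, ← mul_assoc] at hle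
  exact hle

variable [CompleteSpace E]

theorem tendsto_norm_sq_apply_zero (h : ∀ m, IsCentredH1 α (ψ m) (ψ' m) (N m))
    (hres : Tendsto (fun m => ∫ x, ‖bogomolnyResidual k (ψ m) (ψ' m) (N m) x‖ ^ 2) atTop (𝓝 0)) :
    Tendsto (fun m => ‖ψ m 0‖ ^ 2) atTop (𝓝 (k * α ^ 2)) := by
  rw [← tendsto_sub_nhds_zero_iff]
  refine squeeze_zero_norm (a := fun m => 2 * √(2 * α) *
    √(∫ x, ‖bogomolnyResidual k (ψ m) (ψ' m) (N m) x‖ ^ 2)) (fun m => ?_) ?_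
  · simpa [(h m).isCentredMass.map_zero] using (h m).abs_norm_sq_sub_le k 0
  · simpa using hres.sqrt.const_mul (2 * √(2 * α))

theorem tendsto_mass (hk : 0 ≤ k) (h : ∀ m, IsCentredH1 α (ψ m) (ψ' m) (N m))
    (hres : Tendsto (fun m => ∫ x, ‖bogomolnyResidual k (ψ m) (ψ' m) (N m) x‖ ^ 2) atTop (𝓝 0))
    (hT : IsCentredMass α T fun x => k * (α ^ 2 - T x ^ 2)) (x : ℝ) :
    Tendsto (fun m => N m x) atTop (𝓝 (T x)) := by
  rw [← tendsto_sub_nhds_zero_iff]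
  refine squeeze_zero_norm (fun m => (h m).isCentredMass.abs_sub_le_gronwallBound hk hT
    ((h m).abs_norm_sq_sub_le k) x) ?_
  have herr := hres.sqrt.const_mul (2 * √(2 * α))
  rw [Real.sqrt_zero, mul_zero] at herr
  simpa only [gronwallBound_ε0_δ0, Function.comp_def] using
    ((gronwallBound_continuous_ε 0 (2 * k * α) |x|).tendsto 0).comp herr

theorem IsCentredH1.norm_sq_eq_of_bogomolnyResidual_eq_zero (hχ : IsCentredH1 α χ χ' T)
    (hχres : bogomolnyResidual k χ χ' T = 0) (x : ℝ) : ‖χ x‖ ^ 2 = k * (α ^ 2 - T x ^ 2) := by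
  simpa [hχres, sub_eq_zero] using hχ.abs_norm_sq_sub_le k x

theorem IsCentredH1.exp_smul_eq_of_bogomolnyResidual_eq_zero (hk : 0 ≤ k)
    (hχ : IsCentredH1 α χ χ' T) (hχres : bogomolnyResidual k χ χ' T = 0) (x : ℝ) :
    Real.exp (k * ∫ t in 0..x, T t) • χ x = χ 0 := by
  simpa [hχres, sub_eq_zero] using hχ.norm_exp_smul_sub_le hk x

theorem tendsto_apply_of_bogomolnyResidual (hk : 0 ≤ k)
    (h : ∀ m, IsCentredH1 α (ψ m) (ψ' m) (N m))
    (hres : Tendsto (fun m => ∫ x, ‖bogomolnyResidual k (ψ m) (ψ' m) (N m) x‖ ^ 2) atTop (𝓝 0))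
    (hχ : IsCentredH1 α χ χ' T) (hχres : bogomolnyResidual k χ χ' T = 0)
    (hN : ∀ x, Tendsto (fun m => N m x) atTop (𝓝 (T x)))
    (h0 : Tendsto (fun m => ψ m 0) atTop (𝓝 (χ 0))) (x : ℝ) :
    Tendsto (fun m => ψ m x) atTop (𝓝 (χ x)) := by
  have hgap : Tendsto (fun m => Real.exp (k * ∫ t in 0..x, N m t) • ψ m x - ψ m 0) atTop (𝓝 0) := by
    refine squeeze_zero_norm (fun m => (h m).norm_exp_smul_sub_le hk x) ?_
    simpa using (hres.sqrt.const_mul √|x|).const_mul (Real.exp (k * (α * |x|)))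
  have hmass := tendsto_integral_of_isCentredMass (fun m => (h m).isCentredMass) hN x
  have hexp := (hmass.const_mul k).rexp
  have hlim : Tendsto (fun m => Real.exp (k * ∫ t in 0..x, N m t) • ψ m x) atTop
      (𝓝 (Real.exp (k * ∫ t in 0..x, T t) • χ x)) := by
    rw [hχ.exp_smul_eq_of_bogomolnyResidual_eq_zero hk hχres]
    simpa using hgap.add h0
  simpa [inv_smul_smul₀ (Real.exp_ne_zero _)] using (hexp.inv₀ (Real.exp_ne_zero _)).smul hlim

theorem tendsto_sobolev_of_bogomolnyResidual (hk : 0 ≤ k)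
    (h : ∀ m, IsCentredH1 α (ψ m) (ψ' m) (N m))
    (hres : Tendsto (fun m => ∫ x, ‖bogomolnyResidual k (ψ m) (ψ' m) (N m) x‖ ^ 2) atTop (𝓝 0))
    (hχ : IsCentredH1 α χ χ' T) (hχres : bogomolnyResidual k χ χ' T = 0)
    (h0 : Tendsto (fun m => ψ m 0) atTop (𝓝 (χ 0))) :
    Tendsto (fun m => (∫ x, ‖ψ m x - χ x‖ ^ 2) + ∫ x, ‖ψ' m x - χ' x‖ ^ 2) atTop (𝓝 0) := by
  have hT : IsCentredMass α T fun x => k * (α ^ 2 - T x ^ 2) := by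
    simpa only [hχ.norm_sq_eq_of_bogomolnyResidual_eq_zero hχres] using hχ.isCentredMass
  have hN := tendsto_mass hk h hres hT
  have hψ := tendsto_apply_of_bogomolnyResidual hk h hres hχ hχres hN h0
  have hNψ := tendsto_integral_norm_mass_smul_sub_sq h hχ hN hψ
  simpa using (tendsto_integral_norm_sub_sq h hχ hψ).add
    (tendsto_integral_norm_deriv_sub_sq h hres hχ hχres hNψ)

end MinimisingSequence

section Soliton

theorem tendsto_tanh_atTop : Tendsto Real.tanh atTop (𝓝 1) := by
  have hlower : Tendsto (fun x : ℝ => 1 - Real.exp (-x)) atTop (𝓝 1) := by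
    simpa using Real.tendsto_exp_neg_atTop_nhds_zero.const_sub 1
  refine tendsto_of_tendsto_of_tendsto_of_le_of_le hlower tendsto_const_nhds (fun x => ?_)
    fun x => (Real.tanh_lt_one x).le
  rw [Real.tanh_eq_sinh_div_cosh, le_div_iff₀ (Real.cosh_pos x)]
  nlinarith [Real.one_le_cosh x, Real.cosh_sub_sinh x, Real.exp_pos (-x)]

theorem hasDerivAt_tanh (x : ℝ) : HasDerivAt Real.tanh (1 - Real.tanh x ^ 2) x := by
  have hquot := (Real.hasDerivAt_sinh x).div (Real.hasDerivAt_cosh x) (Real.cosh_pos x).ne'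
  refine (hquot.congr_deriv ?_).congr_of_eventuallyEq
    (Eventually.of_forall Real.tanh_eq_sinh_div_cosh)
  have := (Real.cosh_pos x).ne'
  rw [Real.tanh_eq_sinh_div_cosh]
  field_simp

theorem hasDerivAt_sech (x : ℝ) : HasDerivAt sech (-(Real.tanh x * sech x)) x := by
  refine ((hasDerivAt_const x 1).div (Real.hasDerivAt_cosh x) (Real.cosh_pos x).ne').congr_deriv ?_
  have := (Real.cosh_pos x).ne'
  rw [Real.tanh_eq_sinh_div_cosh, sech]
  field_simp
  ring

theorem sech_sq (x : ℝ) : sech x ^ 2 = 1 - Real.tanh x ^ 2 := by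
  have := (Real.cosh_pos x).ne'
  rw [Real.tanh_eq_sinh_div_cosh, sech]
  field_simp
  linarith [Real.cosh_sq x]

variable {k α : ℝ}

/-- The mass function `x ↦ ∫ t in 0..x, ‖χ t‖²` of a soliton `χ = sech (kα ·) • z` with
`‖z‖² = kα²`. -/
noncomputable def solitonMass (k α x : ℝ) : ℝ := α * Real.tanh (k * α * x)

theorem isCentredMass_solitonMass (hk : 0 < k) (hα : 0 < α) :
    IsCentredMass α (solitonMass k α) (fun x => k * (α ^ 2 - solitonMass k α x ^ 2)) where
  hasDerivAt x := by
    have hlin : HasDerivAt (fun x => k * α * x) (k * α) x := by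
      simpa using (hasDerivAt_id x).const_mul (k * α)
    exact (((hasDerivAt_tanh _).comp x hlin).const_mul α).congr_deriv
      (by rw [solitonMass]; ring)
  density_nonneg x := by
    have := Real.tanh_sq_lt_one (k * α * x)
    rw [solitonMass, mul_pow, ← mul_one_sub]
    have : 0 ≤ 1 - Real.tanh (k * α * x) ^ 2 := by linarith
    positivity
  map_zero := by simp [solitonMass]
  tendsto_atTop := by
    simpa using! (tendsto_tanh_atTop.comp
      (tendsto_id.const_mul_atTop (mul_pos hk hα))).const_mul α
  tendsto_atBot := by
    simpa using! (tendsto_tanh_atTop.comp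
      (tendsto_neg_atBot_atTop.comp (tendsto_id.const_mul_atBot (mul_pos hk hα)))).const_mul (-α)

variable {E : Type*} [NormedAddCommGroup E]

/-- The ground state `x ↦ sech (kαx) • z`, whose vector-valued amplitude `z` absorbs the phase. -/
noncomputable def soliton [NormedSpace ℝ E] (k α : ℝ) (z : E) (x : ℝ) : E := sech (k * α * x) • z

theorem hasDerivAt_soliton [NormedSpace ℝ E] (k α : ℝ) (z : E) (x : ℝ) :
    HasDerivAt (soliton k α z) (-(k * solitonMass k α x) • soliton k α z x) x := by
  have hlin : HasDerivAt (fun x => k * α * x) (k * α) x := by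
    simpa using (hasDerivAt_id x).const_mul (k * α)
  refine (((hasDerivAt_sech _).comp x hlin).smul_const z).congr_deriv ?_
  rw [soliton, solitonMass, smul_smul]
  congr 1
  ring

variable [InnerProductSpace ℝ E] {z : E}

theorem bogomolnyResidual_soliton (k α : ℝ) (z : E) :
    bogomolnyResidual k (soliton k α z) (fun x => -(k * solitonMass k α x) • soliton k α z x)
      (solitonMass k α) = 0 := by
  ext x
  simp [bogomolnyResidual]

theorem norm_soliton_sq (hz : ‖z‖ ^ 2 = k * α ^ 2) (x : ℝ) :
    ‖soliton k α z x‖ ^ 2 = k * (α ^ 2 - solitonMass k α x ^ 2) := by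
  rw [soliton, norm_smul, mul_pow, Real.norm_eq_abs, sq_abs, sech_sq, hz, solitonMass]
  ring

theorem isCentredH1_soliton (hk : 0 < k) (hα : 0 < α) (hz : ‖z‖ ^ 2 = k * α ^ 2) :
    IsCentredH1 α (soliton k α z) (fun x => -(k * solitonMass k α x) • soliton k α z x)
      (solitonMass k α) := by
  have hmass : IsCentredMass α (solitonMass k α) (fun x => ‖soliton k α z x‖ ^ 2) := by
    simpa only [norm_soliton_sq hz] using isCentredMass_solitonMass hk hα
  have hcont : Continuous (soliton k α z) :=
    continuous_iff_continuousAt.2 fun x => (hasDerivAt_soliton k α z x).continuousAt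
  refine ⟨.of_hasDerivAt (hasDerivAt_soliton k α z)
    ((hmass.continuous.const_mul k).neg.smul hcont), ?_, hmass⟩
  convert hmass.integrable_sq_mul_density.const_mul (k ^ 2) using 2 with x
  rw [norm_smul, mul_pow, Real.norm_eq_abs, sq_abs]
  ring

theorem exists_subseq_tendsto_soliton [ProperSpace E] {ψ ψ' : ℕ → ℝ → E} {N : ℕ → ℝ → ℝ}
    (hk : 0 < k) (hα : 0 < α) (h : ∀ m, IsCentredH1 α (ψ m) (ψ' m) (N m))
    (hres : Tendsto (fun m => ∫ x, ‖bogomolnyResidual k (ψ m) (ψ' m) (N m) x‖ ^ 2) atTop (𝓝 0)) :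
    ∃ (z : E) (mj : ℕ → ℕ), ‖z‖ ^ 2 = k * α ^ 2 ∧ StrictMono mj ∧
      Tendsto (fun j => (∫ x, ‖ψ (mj j) x - soliton k α z x‖ ^ 2) +
        ∫ x, ‖ψ' (mj j) x - -(k * solitonMass k α x) • soliton k α z x‖ ^ 2) atTop (𝓝 0) := by
  have hnorm : Tendsto (fun m => ‖ψ m 0‖ ^ 2) atTop (𝓝 (k * α ^ 2)) :=
    tendsto_norm_sq_apply_zero h hres
  obtain ⟨M, hM⟩ := hnorm.bddAbove_range
  have hbounded m : ψ m 0 ∈ Metric.closedBall (0 : E) √M :=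
    mem_closedBall_zero_iff.2 (Real.le_sqrt_of_sq_le (hM ⟨m, rfl⟩))
  obtain ⟨z, -, mj, hmj, hz⟩ := tendsto_subseq_of_bounded Metric.isBounded_closedBall hbounded
  have hz_norm : ‖z‖ ^ 2 = k * α ^ 2 :=
    tendsto_nhds_unique (hz.norm.pow 2) (hnorm.comp hmj.tendsto_atTop)
  refine ⟨z, mj, hz_norm, hmj, tendsto_sobolev_of_bogomolnyResidual hk.le (fun j => h (mj j))
    (hres.comp hmj.tendsto_atTop) (isCentredH1_soliton hk hα hz_norm)
    (bogomolnyResidual_soliton k α z) ?_⟩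
  simpa [soliton, sech, Function.comp_def] using hz

end Soliton

namespace H1PairC

variable {ψ ψ' : ℝ → ℂ}

theorem comp_add_const (h : H1PairC ψ ψ') (c : ℝ) :
    H1PairC (fun x => ψ (x + c)) (fun x => ψ' (x + c)) := by
  obtain ⟨hcont, hψ, hψ', hint⟩ := h
  refine ⟨hcont.comp (continuous_id.add_const c), hψ.comp_add_right c, hψ'.comp_add_right c,
    fun a b hab => ?_⟩
  rw [intervalIntegral.integral_comp_add_right, hint _ _ (by linarith)]

theorem hasACDeriv (h : H1PairC ψ ψ') (hne : ψ ≠ 0) : HasACDeriv ψ ψ' := by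
  obtain ⟨-, hψ, -, hint⟩ := h
  refine .of_integral_eq_sub (intervalIntegrable_of_sub_eq_integral hψ hne hint) fun a b => ?_
  rcases le_total a b with hab | hba
  · exact (hint a b hab).symm
  · rw [intervalIntegral.integral_symm, ← hint b a hba, neg_sub]

theorem exists_isCentredH1_translate {α : ℝ} (h : H1PairC ψ ψ') (hα : 0 < α)
    (hmass : ∫ x, ‖ψ x‖ ^ 2 = 2 * α) :
    ∃ (x₀ : ℝ) (N : ℝ → ℝ), IsCentredH1 α (fun x => ψ (x + x₀)) (fun x => ψ' (x + x₀)) N := by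
  obtain ⟨x₀, N, hN⟩ := exists_isCentredMass_translate (n := fun x => ‖ψ x‖ ^ 2) hα
    (h.1.norm.pow 2) (fun x => sq_nonneg ‖ψ x‖) h.2.1 hmass
  have htrans := h.comp_add_const x₀
  refine ⟨x₀, N, htrans.hasACDeriv fun hzero => ?_, htrans.2.2.1, hN⟩
  have hzero_mass : ∫ x, ‖ψ (x + x₀)‖ ^ 2 = 0 := by simp [congrFun hzero]
  linarith [hN.integral_density]

end H1PairC

theorem ENLS_eq_integral_translate {g₂ A : ℝ} (hg₂ : g₂ ≠ 0) (ψ ψ' : ℝ → ℂ) (c : ℝ) :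
    ENLS g₂ A ψ ψ' =
      g₂ / 8 * ∫ x, (‖ψ' (x + c)‖ ^ 2 - -3 * A / g₂ * ‖ψ (x + c)‖ ^ 4) := by
  rw [ENLS, ← integral_const_mul, ← integral_add_right_eq_self _ c]
  congr 1 with x
  field_simp
  ring

theorem IsCentredH1.integral_norm_bogomolnyResidual_sq_eq_ENLS_gap {g₂ A α c : ℝ} {ψ ψ' : ℝ → ℂ}
    {N : ℝ → ℝ} (hg₂ : g₂ ≠ 0)
    (h : IsCentredH1 α (fun x => ψ (x + c)) (fun x => ψ' (x + c)) N) :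
    ∫ x, ‖bogomolnyResidual (-3 * A / g₂) (fun x => ψ (x + c)) (fun x => ψ' (x + c)) N x‖ ^ 2 =
      8 / g₂ * (ENLS g₂ A ψ ψ' - -3 * α ^ 3 * A ^ 2 / (4 * g₂)) := by
  rw [h.integral_norm_bogomolnyResidual_sq, ENLS_eq_integral_translate hg₂ ψ ψ' c]
  generalize ∫ x, (‖ψ' (x + c)‖ ^ 2 - -3 * A / g₂ * ‖ψ (x + c)‖ ^ 4) = energy
  field_simp
  ring

theorem exists_mem_Ico_norm_mul_exp_mul_I (z : ℂ) :
    ∃ θ ∈ Set.Ico (0 : ℝ) (2 * Real.pi), z = ‖z‖ * Complex.exp (θ * Complex.I) := by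
  obtain ⟨θ, hθ, heq⟩ := (periodic_circleMap 0 ‖z‖).exists_mem_Ico₀ Real.two_pi_pos z.arg
  refine ⟨θ, hθ, ?_⟩
  simpa [circleMap_zero, Complex.norm_mul_exp_arg_mul_I] using heq

theorem mul_soliton (k α : ℝ) (c z : ℂ) (x : ℝ) :
    c * soliton k α z x = soliton k α (c * z) x :=
  mul_smul_comm _ _ _

theorem ofReal_mul_sech_eq_soliton {k α : ℝ} {z : ℂ} (hα : 0 ≤ α) (hz : ‖z‖ ^ 2 = k * α ^ 2)
    (x : ℝ) : ((α * √k * sech (k * α * x) : ℝ) : ℂ) = soliton k α (‖z‖ : ℂ) x := by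
  have hz_norm : ‖z‖ = α * √k := by
    rw [← Real.sqrt_sq (norm_nonneg z), hz, mul_comm, Real.sqrt_mul (sq_nonneg α),
      Real.sqrt_sq hα]
  rw [soliton, hz_norm, Complex.real_smul, ← Complex.ofReal_mul, mul_comm]

theorem stmt7 (g₂ A α : ℝ) (hg₂ : 0 < g₂) (hA : A < 0) (hα : 0 < α)
    (cN : ℝ) (hcN : cN = -3 * α ^ 3 * A ^ 2 / (4 * g₂))
    (ψK : ℝ → ℂ)
    (hψK : ∀ x : ℝ,
      ψK x = ((α * Real.sqrt (-3 * A / g₂) * sech (-3 * α * A * x / g₂) : ℝ) : ℂ))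
    (ψ : ℕ → ℝ → ℂ) (ψ' : ℕ → ℝ → ℂ)
    (hmem : ∀ m, H1PairC (ψ m) (ψ' m))
    (hcon : ∀ m, (∫ x : ℝ, ‖ψ m x‖ ^ 2) = 2 * α)
    (hmin : Tendsto (fun m => ENLS g₂ A (ψ m) (ψ' m)) atTop (nhds cN)) :
    ∃ (x : ℕ → ℝ) (mj : ℕ → ℕ) (θ y : ℝ), StrictMono mj ∧
      θ ∈ Set.Ico (0 : ℝ) (2 * Real.pi) ∧
      Tendsto (fun j =>
        (∫ t : ℝ, ‖ψ (mj j) (t + x (mj j)) -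
          Complex.exp ((θ : ℂ) * Complex.I) * ψK (t + y)‖ ^ 2) +
        ∫ t : ℝ, ‖ψ' (mj j) (t + x (mj j)) -
          Complex.exp ((θ : ℂ) * Complex.I) * deriv ψK (t + y)‖ ^ 2)
        atTop (nhds 0) := by
  set k : ℝ := -3 * A / g₂
  have hk : 0 < k := div_pos (by linarith) hg₂
  choose x N hcentred using fun m => (hmem m).exists_isCentredH1_translate hα (hcon m)
  have hres := (tendsto_sub_nhds_zero_iff.2 hmin).const_mul (8 / g₂)
  simp only [hcN, mul_zero, ← (hcentred _).integral_norm_bogomolnyResidual_sq_eq_ENLS_gap hg₂.ne']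
    at hres
  obtain ⟨z, mj, hz, hmj, hlim⟩ := exists_subseq_tendsto_soliton hk hα hcentred hres
  obtain ⟨θ, hθ, hzθ⟩ := exists_mem_Ico_norm_mul_exp_mul_I z
  have hψK_eq : ψK = soliton k α (‖z‖ : ℂ) := by
    ext1 t
    rw [hψK, ← ofReal_mul_sech_eq_soliton hα.le hz]
    congr 3
    ring
  have hphase t : Complex.exp (θ * Complex.I) * ψK t = soliton k α z t := by
    rw [hψK_eq, mul_soliton, mul_comm, ← hzθ]
  have hphase_deriv t : Complex.exp (θ * Complex.I) * deriv ψK t =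
      -(k * solitonMass k α t) • soliton k α z t := by
    rw [← hphase, hψK_eq, (hasDerivAt_soliton k α _ t).deriv, mul_smul_comm]
  refine ⟨x, mj, θ, 0, hmj, hθ, ?_⟩
  simpa only [add_zero, hphase, hphase_deriv] using hlim
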